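/- Let 𝒜 be an abelian category with enough injectives satisfying AB4*-n for some nonnegative integer n. Then for every object N of the unbounded derived category D(𝒜), the natural map N → holim_{i≥0} N_{≥−i} is an isomorphism in D(𝒜). -/

import Mathlib

/-!
STATEMENT 6 (Theorem 1.3, first part): Let `𝒜` be an abelian category with enough injectives
satisfying AB4*-n for some nonnegative integer `n`.  Then for every object `N` of the
unbounded derived category `D(𝒜)`, the natural map `N → holim_{i≥0} N_{≥−i}` is an
isomorphism in `D(𝒜)`.

The system of good truncations `M i = N_{≥ -i}` is characterized on cohomology, the homotopy
limit by its defining distinguished triangle (the product being assumed representable, as in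
the paper's definition of homotopy limits), and the natural map `N ⟶ H` is any map compatible
with the truncation maps `π i : N ⟶ N_{≥ -i}`.
-/

open CategoryTheory Limits Pretriangulated

universe w v u

/-- AB4*-`n`: the derived functors of product, computed via injective resolutions, vanish in
degrees `> n`. -/
def AB4StarMinus (C : Type u) [Category.{v} C] [Abelian C] [HasProducts.{0} C] (n : ℕ) : Prop :=
  ∀ (I : Type) (A : I → C) (R : ∀ i, InjectiveResolution (A i)) (q : ℕ), n < q →
    IsZero ((HomologicalComplex.homologyFunctor C (ComplexShape.up ℕ) q).obj
      (∏ᶜ fun i => (R i).cocomplex))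

variable {C : Type u} [Category.{v} C] [Abelian C] [HasProducts.{0} C] [EnoughInjectives C]
  [HasDerivedCategory.{w} C]

/-- `(M, α, π)` is the inverse system of good truncations `M i = N_{≥ c i}` of `N`. -/
def IsTruncGESystem (N : DerivedCategory C) (c : ℕ → ℤ) (M : ℕ → DerivedCategory C)
    (α : ∀ i, M (i + 1) ⟶ M i) (π : ∀ i, N ⟶ M i) : Prop :=
  (∀ i, π (i + 1) ≫ α i = π i) ∧
  (∀ (i : ℕ) (k : ℤ), c i ≤ k → IsIso ((DerivedCategory.homologyFunctor C k).map (π i))) ∧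
  (∀ (i : ℕ) (k : ℤ), k < c i → IsZero ((DerivedCategory.homologyFunctor C k).obj (M i)))

/-!
Fix a degree `k` and put `a = k - n - 1`. The product of the `τ_{<a} M i` can be computed on
K-injective models, and AB4*-`n` places its cohomology in degrees at most `a - 1 + n`. Hence
`∏ M i ⟶ ∏ τ_{≥a} M i` induces isomorphisms on cohomology in the degrees `k - 1` and `k`. The system
`τ_{≥a} M i` is eventually constant, say from `m` on; for such a system the projection to the `m`-th
term and `1 - shift` identify the product with the direct sum of that term and the product itself.
The long exact sequence of the homotopy limit `H` then shows that `H ⟶ M m` is injective on `H^k`.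
As `N ⟶ H ⟶ M m` is an isomorphism on `H^k` for `m` large, so is `N ⟶ H`.
-/

section HomotopyProduct

variable {ι V : Type*} [Category V] [Preadditive V] [HasProductsOfShape ι V]

/-- A family of homotopies between the components of two morphisms into a product of complexes
assembles to a homotopy between the two morphisms. -/
noncomputable def homotopyToPi {J : Type*} {s : ComplexShape J} {K : HomologicalComplex V s}
    {L : ι → HomologicalComplex V s} {f g : K ⟶ ∏ᶜ L}
    (η : ∀ i, Homotopy (f ≫ Pi.π L i) (g ≫ Pi.π L i)) : Homotopy f g :=
  let isLimitX (q : J) : IsLimit (Fan.mk ((∏ᶜ L).X q) fun i => (Pi.π L i).f q) :=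
    isLimitFanMkObjOfIsLimit (HomologicalComplex.eval V s q) L (Pi.π L) (productIsProduct L)
  let hom (p q : J) : K.X p ⟶ (∏ᶜ L).X q := Fan.IsLimit.lift (isLimitX q) fun i => (η i).hom p q
  have hom_π (i : ι) : (fun p q => hom p q ≫ (Pi.π L i).f q) = (η i).hom := by
    funext p q
    exact Fan.IsLimit.fac (isLimitX q) _ i
  { hom := hom
    zero := fun p q hpq => Fan.IsLimit.hom_ext (isLimitX q) _ _ fun i => by
      rw [zero_comp, ← (η i).zero p q hpq, ← hom_π]
      rfl
    comm := fun p => Fan.IsLimit.hom_ext (isLimitX p) _ _ fun i => by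
      have h := (η i).comm p
      rw [← hom_π, dNext_comp_right, prevD_comp_right] at h
      simpa using h }

instance isKInjective_pi {A : Type*} [Category A] [Abelian A] [HasProductsOfShape ι A]
    (L : ι → CochainComplex A ℤ) [∀ i, (L i).IsKInjective] : (∏ᶜ L).IsKInjective where
  nonempty_homotopy_zero f hK :=
    ⟨homotopyToPi fun i =>
      ((CochainComplex.IsKInjective.nonempty_homotopy_zero (f ≫ Pi.π L i) hK).some).trans
        (.ofEq zero_comp.symm)⟩

end HomotopyProduct

section DerivedProduct

variable {A : Type u} [Category.{v} A] [Abelian A] [HasDerivedCategory.{w} A]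

lemma Q_map_surjective_of_isKInjective (K L : CochainComplex A ℤ) [L.IsKInjective] :
    Function.Surjective (DerivedCategory.Q.map : (K ⟶ L) → _) := by
  intro φ
  obtain ⟨g, hg⟩ := (CochainComplex.IsKInjective.Qh_map_bijective
      ((HomotopyCategory.quotient _ _).obj K) L).surjective
    ((DerivedCategory.quotientCompQhIso A).hom.app K ≫ φ ≫
      (DerivedCategory.quotientCompQhIso A).inv.app L)
  obtain ⟨f, rfl⟩ := (HomotopyCategory.quotient _ _).map_surjective g
  refine ⟨f, ?_⟩
  rw [← cancel_epi ((DerivedCategory.quotientCompQhIso A).hom.app K),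
    ← DerivedCategory.quotientCompQhIso_hom_naturality, hg]
  simp only [Category.assoc, Iso.inv_hom_id_app]
  exact congrArg (_ ≫ ·) (Category.comp_id φ)

lemma nonempty_homotopy_of_Q_map_eq {K L : CochainComplex A ℤ} [L.IsKInjective] {f g : K ⟶ L}
    (h : DerivedCategory.Q.map f = DerivedCategory.Q.map g) : Nonempty (Homotopy f g) := by
  refine ⟨HomotopyCategory.homotopyOfEq _ _
    ((CochainComplex.IsKInjective.Qh_map_bijective _ _).injective ?_)⟩
  rw [← cancel_mono ((DerivedCategory.quotientCompQhIso A).hom.app L),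
    DerivedCategory.quotientCompQhIso_hom_naturality, h,
    DerivedCategory.quotientCompQhIso_hom_naturality]

variable {ι : Type*} [HasProductsOfShape ι A]

lemma existsUnique_comp_Q_map_pi (L : ι → CochainComplex A ℤ) [∀ i, (L i).IsKInjective]
    {X : DerivedCategory A} (φ : ∀ i, X ⟶ DerivedCategory.Q.obj (L i)) :
    ∃! l : X ⟶ DerivedCategory.Q.obj (∏ᶜ L), ∀ i, l ≫ DerivedCategory.Q.map (Pi.π L i) = φ i := by
  let e := DerivedCategory.Q.objObjPreimageIso X
  refine existsUnique_of_exists_of_unique ?_ fun l l' hl hl' => ?_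
  · choose f hf using fun i => Q_map_surjective_of_isKInjective _ _ (e.hom ≫ φ i)
    refine ⟨e.inv ≫ DerivedCategory.Q.map (Pi.lift f), fun i => ?_⟩
    rw [Category.assoc, ← Functor.map_comp, Pi.lift_π, hf, Iso.inv_hom_id_assoc]
  · obtain ⟨f, hf⟩ := Q_map_surjective_of_isKInjective _ _ (e.hom ≫ l)
    obtain ⟨f', hf'⟩ := Q_map_surjective_of_isKInjective _ _ (e.hom ≫ l')
    have η (i : ι) : Nonempty (Homotopy (f ≫ Pi.π L i) (f' ≫ Pi.π L i)) :=
      nonempty_homotopy_of_Q_map_eq (by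
        rw [Functor.map_comp, Functor.map_comp, hf, hf', Category.assoc, Category.assoc, hl, hl'])
    rw [← cancel_epi e.hom, ← hf, ← hf',
      DerivedCategory.Q_map_eq_of_homotopy _ (homotopyToPi fun i => (η i).some)]

/-- The universal property in the derived category of the product of a family of K-injective
complexes `L i`, as a product of objects `X i` isomorphic to the `Q.obj (L i)`. -/
noncomputable def isLimitFanMkQPi (L : ι → CochainComplex A ℤ) [∀ i, (L i).IsKInjective]
    {X : ι → DerivedCategory A} (e : ∀ i, X i ≅ DerivedCategory.Q.obj (L i)) :
    IsLimit (Fan.mk (DerivedCategory.Q.obj (∏ᶜ L))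
      fun i => DerivedCategory.Q.map (Pi.π L i) ≫ (e i).inv) :=
  have key {Y : DerivedCategory A} (φ : ∀ i, Y ⟶ X i) :=
    existsUnique_comp_Q_map_pi L fun i => φ i ≫ (e i).hom
  Fan.IsLimit.mk _ (fun s => (key s.proj).exists.choose)
    (fun s i => by simp [reassoc_of% (key s.proj).exists.choose_spec i])
    (fun s l hl => (key s.proj).unique (fun i => by simp [← hl i]) (key s.proj).exists.choose_spec)

end DerivedProduct

section ProductsOfInjectives

variable {A : Type u} [Category.{v} A] [Abelian A]

/-- A complex of injectives indexed by `ℕ` that is exact in positive degrees, seen as an injective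
resolution of the kernel of its first differential. -/
noncomputable def injectiveResolutionOfExactAtSucc (K : CochainComplex A ℕ)
    (hI : ∀ n, Injective (K.X n)) (hK : ∀ n, K.ExactAt (n + 1)) :
    InjectiveResolution (kernel (K.d 0 1)) where
  cocomplex := K
  injective := hI
  ι := (CochainComplex.fromSingle₀Equiv _ _).symm ⟨kernel.ι (K.d 0 1), kernel.condition _⟩
  quasiIso := ⟨fun n => by
    cases n with
    | zero =>
      rw [CochainComplex.quasiIsoAt₀_iff,
        ShortComplex.quasiIso_iff_of_zeros _ rfl rfl (K.shape _ _ (by simp))]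
      refine (ShortComplex.exact_and_mono_f_iff_of_iso ?_).2
        ⟨ShortComplex.exact_kernel (K.d 0 1), equalizer.ι_mono⟩
      refine ShortComplex.isoMk (Iso.refl _) (Iso.refl _) (Iso.refl _) ?_ ?_
      · exact (Category.id_comp _).trans ((Category.comp_id _).trans
          (CochainComplex.fromSingle₀Equiv_symm_apply_f_zero (C := K) _ _)).symm
      · exact (Category.id_comp _).trans (Category.comp_id _).symm
    | succ n =>
      rw [quasiIsoAt_iff_exactAt _ _ (CochainComplex.exactAt_succ_single_obj _ n)]
      exact hK n⟩

lemma exactAt_succ_restriction_embeddingUpIntGE_iff (K : CochainComplex A ℤ) (b : ℤ) (q : ℕ) :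
    (K.restriction (ComplexShape.embeddingUpIntGE b)).ExactAt (q + 1) ↔
      K.ExactAt (b + (q + 1)) := by
  rw [HomologicalComplex.exactAt_iff_isZero_homology,
    HomologicalComplex.exactAt_iff_isZero_homology]
  exact (K.restrictionHomologyIso (ComplexShape.embeddingUpIntGE b) q (q + 1) (q + 2)
    (i' := b + q) (j' := b + (q + 1)) (k' := b + (q + 2)) (by simp) (by simp)
    (by simp) (by simp) (by simp) (by simp; lia) (by simp; lia)).isZero_iff

instance preservesLimitsOfShape_restrictionFunctor {V J ι ι' : Type*} [Category V]
    [HasZeroMorphisms V] [Category J] [HasLimitsOfShape J V] {c : ComplexShape ι}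
    {c' : ComplexShape ι'} (e : c.Embedding c') [e.IsRelIff] :
    PreservesLimitsOfShape J (e.restrictionFunctor V) :=
  HomologicalComplex.preservesLimitsOfShape_of_eval _ fun j =>
    inferInstanceAs (PreservesLimitsOfShape J (HomologicalComplex.eval V c' (e.f j)))

lemma AB4StarMinus.isLE_pi [HasProducts.{0} A] {n : ℕ} (hA : AB4StarMinus A n) {ι : Type}
    (L : ι → CochainComplex A ℤ) [∀ i k, Injective ((L i).X k)] (b : ℤ) [∀ i, (L i).IsLE b] :
    (∏ᶜ L).IsLE (b + n) := by
  let Φ := (ComplexShape.embeddingUpIntGE b).restrictionFunctor A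
  have hL (i : ι) (q : ℕ) : (Φ.obj (L i)).ExactAt (q + 1) :=
    (exactAt_succ_restriction_embeddingUpIntGE_iff (L i) b q).2 ((L i).exactAt_of_isLE b _)
  rw [CochainComplex.isLE_iff]
  intro k hk
  obtain ⟨q, rfl⟩ : ∃ q : ℕ, k = b + (q + 1) := ⟨(k - b - 1).toNat, by lia⟩
  rw [← exactAt_succ_restriction_embeddingUpIntGE_iff]
  refine HomologicalComplex.ExactAt.of_iso ?_ (PreservesProduct.iso Φ L).symm
  rw [HomologicalComplex.exactAt_iff_isZero_homology]
  exact hA ι _ (fun i => injectiveResolutionOfExactAtSucc (Φ.obj (L i))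
    (fun k => inferInstanceAs (Injective ((L i).X _))) (hL i)) (q + 1) (by lia)

variable [EnoughInjectives A] [HasDerivedCategory.{w} A]

open DerivedCategory.TStructure

lemma exists_injective_model_of_plus {X : DerivedCategory A} (hX : t.plus X) :
    ∃ L : CochainComplex A ℤ, L.IsKInjective ∧ (∀ k, Injective (L.X k)) ∧
      Nonempty (X ≅ DerivedCategory.Q.obj L) := by
  obtain ⟨b, _⟩ := hX
  obtain ⟨K, _, ⟨e⟩⟩ := DerivedCategory.exists_iso_Q_obj_of_isGE X b
  obtain ⟨L, j, _, _, _⟩ := CochainComplex.Plus.modelCategoryQuillen.exists_quasiIso_injective K b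
  exact ⟨L, CochainComplex.isKInjective_of_injective L b, inferInstance,
    ⟨e ≪≫ asIso (DerivedCategory.Q.map j)⟩⟩

lemma hasProduct_of_plus {ι : Type*} [HasProductsOfShape ι A] {X : ι → DerivedCategory A}
    (hX : ∀ i, t.plus (X i)) : HasProduct X := by
  choose L _ _ e using fun i => exists_injective_model_of_plus (hX i)
  exact ⟨⟨_, isLimitFanMkQPi L fun i => (e i).some⟩⟩

lemma AB4StarMinus.isLE_pi_of_plus [HasProducts.{0} A] {n : ℕ} (hA : AB4StarMinus A n) {ι : Type}
    {X : ι → DerivedCategory A} (hX : ∀ i, t.plus (X i)) [HasProduct X] (b : ℤ)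
    [∀ i, (X i).IsLE b] : (∏ᶜ X).IsLE (b + n) := by
  choose L _ _ e using fun i => exists_injective_model_of_plus (hX i)
  have (i : ι) : (L i).IsLE b := by
    rw [← DerivedCategory.isLE_Q_obj_iff]
    exact t.isLE_of_iso (e i).some b
  have := hA.isLE_pi L b
  let eL : DerivedCategory.Q.obj (∏ᶜ L) ≅ ∏ᶜ X :=
    (isLimitFanMkQPi L fun i => (e i).some).conePointUniqueUpToIso (productIsProduct X)
  exact t.isLE_of_iso eL (b + n)

end ProductsOfInjectives

section Truncation

variable {A : Type u} [Category.{v} A] [Abelian A] [HasDerivedCategory.{w} A]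

open DerivedCategory DerivedCategory.TStructure

lemma isIso_homologyFunctor_map_mor₂_of_isLE {T : Triangle (DerivedCategory A)}
    (hT : T ∈ distTriang (DerivedCategory A)) (b k : ℤ) [T.obj₁.IsLE b] (hk : b < k) :
    IsIso ((homologyFunctor A k).map T.mor₂) := by
  have := (HomologySequence.epi_homologyMap_mor₂_iff T hT k (k + 1) rfl).2
    ((isZero_of_isLE T.obj₁ b (k + 1) (by lia)).eq_of_tgt _ _)
  have := (HomologySequence.mono_homologyMap_mor₂_iff T hT k).2
    ((isZero_of_isLE T.obj₁ b k hk).eq_of_src _ _)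
  exact isIso_of_mono_of_epi _

lemma isIso_homologyFunctor_map_truncGEπ (X : DerivedCategory A) {a k : ℤ} (hk : a ≤ k) :
    IsIso ((homologyFunctor A k).map ((t.truncGEπ a).app X)) :=
  isIso_homologyFunctor_map_mor₂_of_isLE (t.triangleLTGE_distinguished a X) (a - 1) k (by lia)

lemma isIso_truncGE_map_of_isIso_homologyFunctor_map {X Y : DerivedCategory A} (φ : X ⟶ Y) {a : ℤ}
    (hφ : ∀ k, a ≤ k → IsIso ((homologyFunctor A k).map φ)) : IsIso ((t.truncGE a).map φ) := by
  rw [DerivedCategory.isIso_iff]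
  intro k
  rcases lt_or_ge k a with hk | hk
  · have hX := isZero_of_isGE ((t.truncGE a).obj X) a k hk
    have hY := isZero_of_isGE ((t.truncGE a).obj Y) a k hk
    exact ⟨0, hX.eq_of_src _ _, hY.eq_of_src _ _⟩
  · have := hφ k hk
    have := isIso_homologyFunctor_map_truncGEπ X hk
    have := isIso_homologyFunctor_map_truncGEπ Y hk
    have : IsIso ((homologyFunctor A k).map ((t.truncGEπ a).app X) ≫
        (homologyFunctor A k).map ((t.truncGE a).map φ)) := by
      rw [← Functor.map_comp, t.truncGEπ_naturality, Functor.map_comp]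
      infer_instance
    exact IsIso.of_isIso_comp_left ((homologyFunctor A k).map ((t.truncGEπ a).app X)) _

lemma plus_truncLT {X : DerivedCategory A} (hX : t.plus X) (a : ℤ) :
    t.plus ((t.truncLT a).obj X) := by
  obtain ⟨b, _⟩ := hX
  exact ⟨b, inferInstance⟩

lemma plus_truncGE (X : DerivedCategory A) (a : ℤ) : t.plus ((t.truncGE a).obj X) :=
  ⟨a, inferInstance⟩

lemma AB4StarMinus.isIso_homologyFunctor_map_piMap_truncGEπ [HasProducts.{0} A]
    [EnoughInjectives A] {n : ℕ} (hA : AB4StarMinus A n) {ι : Type} {X : ι → DerivedCategory A}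
    (hX : ∀ i, t.plus (X i)) [HasProduct X] (a : ℤ) [HasProduct fun i => (t.truncGE a).obj (X i)]
    {k : ℤ} (hk : a + n ≤ k) :
    IsIso ((homologyFunctor A k).map
      (Limits.Pi.map (f := X) fun i => (t.truncGEπ a).app (X i))) := by
  let T (i : ι) : Triangle (DerivedCategory A) := (t.triangleLTGE a).obj (X i)
  have hT₁ (i : ι) : t.plus (T i).obj₁ := plus_truncLT (hX i) a
  have : HasProduct fun i => (T i).obj₁ := hasProduct_of_plus hT₁
  have : HasProduct fun i => (T i).obj₁⟦(1 : ℤ)⟧ :=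
    hasProduct_of_plus fun i => t.plus.le_shift 1 _ (hT₁ i)
  have : HasProduct fun i => (T i).obj₂ := ‹HasProduct X›
  have : HasProduct fun i => (T i).obj₃ := ‹HasProduct fun i => (t.truncGE a).obj (X i)›
  have hT : productTriangle T ∈ distTriang (DerivedCategory A) :=
    productTriangle_distinguished T fun i => t.triangleLTGE_distinguished a (X i)
  have (i : ι) : (T i).obj₁.IsLE (a - 1) := t.isLE_truncLT_obj ..
  have : (productTriangle T).obj₁.IsLE (a - 1 + n) := hA.isLE_pi_of_plus hT₁ (a - 1)
  exact isIso_homologyFunctor_map_mor₂_of_isLE hT (a - 1 + n) k (by lia)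

end Truncation

section OneSubShift

-- The equations determine `x (i + 1)` from `x i` for `m ≤ i`, and `x i` from `x (i + 1)` always.
lemma existsUnique_sub_map_succ_eq {G : ℕ → Type*} [∀ i, AddGroup (G i)] (α : ∀ i, G (i + 1) → G i)
    {m : ℕ} (hα : ∀ i, m ≤ i → Function.Bijective (α i)) (a : G m) (y : ∀ i, G i) :
    ∃! x : ∀ i, G i, x m = a ∧ ∀ i, x i - α i (x (i + 1)) = y i := by
  induction m generalizing G with
  | zero =>
    choose β hβ using fun i => (hα i i.zero_le).surjective
    refine ⟨fun i => Nat.rec a (fun i xi => β i (-y i + xi)) i, ⟨rfl, fun i => ?_⟩, ?_⟩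
    · rw [hβ, sub_eq_add_neg, neg_add_rev, neg_neg, add_neg_cancel_left]
    · rintro x ⟨rfl, hx⟩
      funext i
      induction i with
      | zero => rfl
      | succ i ih =>
        apply (hα i i.zero_le).injective
        rw [hβ, ← ih, ← hx i, neg_sub, sub_add_cancel]
  | succ m ih =>
    obtain ⟨x, ⟨hxm, hx⟩, hx_unique⟩ := ih (fun i => α (i + 1)) (fun i hi => hα (i + 1) (by lia)) a
      (fun i => y (i + 1))
    refine ⟨fun | 0 => y 0 + α 0 (x 0) | i + 1 => x i, ⟨hxm, fun | 0 => ?_ | i + 1 => hx i⟩, ?_⟩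
    · simp
    · rintro x' ⟨hxm', hx'⟩
      have h (i : ℕ) : x' (i + 1) = x i :=
        congrFun (hx_unique (fun i => x' (i + 1)) ⟨hxm', fun i => hx' (i + 1)⟩) i
      funext i
      cases i with
      | zero => rw [← hx' 0, h 0, sub_add_cancel]
      | succ i => exact h i

variable {D : Type*} [Category D] [Preadditive D] {X Y : ℕ → D} [HasProduct X]

/-- The endomorphism `1 - shift` of the product of an inverse system, whose fiber is the homotopy
limit of the system. -/
noncomputable def oneSubShift (α : ∀ i, X (i + 1) ⟶ X i) : ∏ᶜ X ⟶ ∏ᶜ X :=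
  Pi.lift fun i => Pi.π X i - Pi.π X (i + 1) ≫ α i

lemma oneSubShift_π (α : ∀ i, X (i + 1) ⟶ X i) (i : ℕ) :
    oneSubShift α ≫ Pi.π X i = Pi.π X i - Pi.π X (i + 1) ≫ α i :=
  Pi.lift_π _ _

lemma oneSubShift_naturality [HasProduct Y] {α : ∀ i, X (i + 1) ⟶ X i}
    {β : ∀ i, Y (i + 1) ⟶ Y i} {τ : ∀ i, X i ⟶ Y i} (hτ : ∀ i, α i ≫ τ i = τ (i + 1) ≫ β i) :
    oneSubShift α ≫ Limits.Pi.map τ = Limits.Pi.map τ ≫ oneSubShift β := by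
  refine Pi.hom_ext _ _ fun i => ?_
  simp only [Category.assoc, oneSubShift_π, Pi.map_π, Preadditive.comp_sub, Pi.map_π_assoc,
    reassoc_of% oneSubShift_π, Preadditive.sub_comp, hτ]

lemma isIso_biprodLift_π_oneSubShift [HasBinaryBiproducts D] {α : ∀ i, X (i + 1) ⟶ X i} {m : ℕ}
    (hα : ∀ i, m ≤ i → IsIso (α i)) : IsIso (biprod.lift (Pi.π X m) (oneSubShift α)) := by
  rw [isIso_iff_yoneda_map_bijective]
  intro Z
  have hcomp (i : ℕ) (hi : m ≤ i) : Function.Bijective fun u : Z ⟶ X (i + 1) => u ≫ α i :=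
    (isIso_iff_yoneda_map_bijective _).1 (hα i hi) Z
  rw [Function.bijective_iff_existsUnique]
  intro u
  obtain ⟨x, ⟨hxm, hx⟩, hx_unique⟩ := existsUnique_sub_map_succ_eq (G := fun i => Z ⟶ X i) _ hcomp
    (u ≫ biprod.fst) (fun i => u ≫ biprod.snd ≫ Pi.π X i)
  refine ⟨Pi.lift x, ?_, fun v hv => ?_⟩
  · ext i
    · simpa
    · simpa [oneSubShift_π] using hx i
  · refine Pi.hom_ext _ _ fun i => ?_
    rw [Pi.lift_π]
    refine congrFun (hx_unique (fun i => v ≫ Pi.π X i) ⟨by simp [← hv], fun i => ?_⟩) i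
    simp [← hv, oneSubShift_π]

lemma isSplitEpi_oneSubShift [HasBinaryBiproducts D] {α : ∀ i, X (i + 1) ⟶ X i} {m : ℕ}
    (hα : ∀ i, m ≤ i → IsIso (α i)) : IsSplitEpi (oneSubShift α) := by
  have := isIso_biprodLift_π_oneSubShift hα
  rw [← biprod.lift_snd (Pi.π X m) (oneSubShift α)]
  infer_instance

lemma mono_map_comp_π_of_comp_oneSubShift_eq_zero [HasBinaryBiproducts D]
    {α : ∀ i, X (i + 1) ⟶ X i} {m : ℕ} (hα : ∀ i, m ≤ i → IsIso (α i)) {H : D} {f : H ⟶ ∏ᶜ X}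
    (hf : f ≫ oneSubShift α = 0) {E : Type*} [Category E] (F : D ⥤ E) [Mono (F.map f)] :
    Mono (F.map (f ≫ Pi.π X m)) := by
  have := isIso_biprodLift_π_oneSubShift hα
  have h : f ≫ biprod.lift (Pi.π X m) (oneSubShift α) = (f ≫ Pi.π X m) ≫ biprod.inl := by
    ext <;> simp [hf]
  have : Mono (F.map (f ≫ Pi.π X m) ≫ F.map (biprod.inl (Y := ∏ᶜ X))) := by
    rw [← Functor.map_comp, ← h, Functor.map_comp]
    infer_instance
  exact mono_of_mono _ (F.map (biprod.inl (Y := ∏ᶜ X)))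

end OneSubShift

section TruncGESystem

open DerivedCategory DerivedCategory.TStructure

variable {A : Type u} [Category.{v} A] [Abelian A] [HasDerivedCategory.{w} A]
  {N : DerivedCategory A} {c : ℕ → ℤ} {M : ℕ → DerivedCategory A}
  {α : ∀ i, M (i + 1) ⟶ M i} {π : ∀ i, N ⟶ M i}

lemma IsTruncGESystem.plus (hM : IsTruncGESystem N c M α π) (i : ℕ) : t.plus (M i) :=
  ⟨c i, (isGE_iff _ _).2 (hM.2.2 i)⟩

lemma IsTruncGESystem.isIso_homologyFunctor_map (hM : IsTruncGESystem N c M α π) {i : ℕ} {k : ℤ}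
    (hi : c i ≤ k) (hi' : c (i + 1) ≤ k) : IsIso ((homologyFunctor A k).map (α i)) := by
  have := hM.2.1 (i + 1) k hi'
  have : IsIso ((homologyFunctor A k).map (π (i + 1)) ≫ (homologyFunctor A k).map (α i)) := by
    rw [← Functor.map_comp, hM.1]
    exact hM.2.1 i k hi
  exact IsIso.of_isIso_comp_left ((homologyFunctor A k).map (π (i + 1))) _

end TruncGESystem

section HomotopyLimit

open DerivedCategory DerivedCategory.TStructure

lemma AB4StarMinus.mono_homologyFunctor_map_holim_π {n : ℕ} (hC : AB4StarMinus C n)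
    {M : ℕ → DerivedCategory C} (hM : ∀ i, t.plus (M i)) [HasProduct M]
    {α : ∀ i, M (i + 1) ⟶ M i} {m : ℕ} {a : ℤ}
    (hα : ∀ i, m ≤ i → ∀ k, a ≤ k → IsIso ((homologyFunctor C k).map (α i)))
    {H : DerivedCategory C} {f : H ⟶ ∏ᶜ M} {h : ∏ᶜ M ⟶ H⟦(1 : ℤ)⟧}
    (hH : Triangle.mk f (oneSubShift α) h ∈ distTriang (DerivedCategory C))
    {k : ℤ} (hk : a + n < k) : Mono ((homologyFunctor C k).map (f ≫ Pi.π M m)) := by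
  let M' (i : ℕ) : DerivedCategory C := (t.truncGE a).obj (M i)
  let τ (i : ℕ) : M i ⟶ M' i := (t.truncGEπ a).app (M i)
  let β (i : ℕ) : M' (i + 1) ⟶ M' i := (t.truncGE a).map (α i)
  have hβ (i : ℕ) (hi : m ≤ i) : IsIso (β i) :=
    isIso_truncGE_map_of_isIso_homologyFunctor_map (α i) (hα i hi)
  have : HasProduct M' := hasProduct_of_plus fun i => plus_truncGE (M i) a
  have comm : oneSubShift α ≫ Limits.Pi.map τ = Limits.Pi.map τ ≫ oneSubShift β :=
    oneSubShift_naturality fun i => (t.truncGEπ_naturality a (α i)).symm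
  have hτ {j : ℤ} (hj : a + n ≤ j) : IsIso ((homologyFunctor C j).map (Limits.Pi.map τ)) :=
    hC.isIso_homologyFunctor_map_piMap_truncGEπ hM a hj
  have := hτ (j := k) (by lia)
  have := hτ (j := k - 1) (by lia)
  have epi_α : Epi ((homologyFunctor C (k - 1)).map (oneSubShift α)) := by
    have := isSplitEpi_oneSubShift hβ
    rw [← epi_comp_iff_of_isIso _ ((homologyFunctor C (k - 1)).map (Limits.Pi.map τ)),
      ← Functor.map_comp, comm, Functor.map_comp]
    infer_instance
  have mono_f : Mono ((homologyFunctor C k).map f) :=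
    (HomologySequence.mono_homologyMap_mor₁_iff _ hH (k - 1) k (by lia)).2
      ((HomologySequence.epi_homologyMap_mor₂_iff _ hH (k - 1) k (by lia)).1 epi_α)
  have : Mono ((homologyFunctor C k).map (f ≫ Limits.Pi.map τ)) := by
    rw [Functor.map_comp]
    infer_instance
  have hf : (f ≫ Limits.Pi.map τ) ≫ oneSubShift β = 0 := by
    have : f ≫ oneSubShift α = 0 := comp_distTriang_mor_zero₁₂ _ hH
    rw [Category.assoc, ← comm, reassoc_of% this, zero_comp]
  have := mono_map_comp_π_of_comp_oneSubShift_eq_zero hβ hf (homologyFunctor C k)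
  rw [Category.assoc, Pi.map_π, ← Category.assoc, Functor.map_comp] at this
  exact mono_of_mono _ ((homologyFunctor C k).map (τ m))

theorem isIso_to_holim_truncations_of_ab4StarMinus_general
    {n : ℕ} (hC : AB4StarMinus C n)
    {N : DerivedCategory C} {c : ℕ → ℤ} (hc : Filter.Tendsto c Filter.atTop Filter.atBot)
    {M : ℕ → DerivedCategory C} {α : ∀ i, M (i + 1) ⟶ M i} {π : ∀ i, N ⟶ M i}
    (hM : IsTruncGESystem N c M α π) [HasProduct M]
    {H : DerivedCategory C} {f : H ⟶ ∏ᶜ M} {h : ∏ᶜ M ⟶ H⟦(1 : ℤ)⟧}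
    (hH : Triangle.mk f (oneSubShift α) h ∈ distTriang (DerivedCategory C))
    {g : N ⟶ H} (hg : g ≫ f = Pi.lift π) : IsIso g := by
  rw [DerivedCategory.isIso_iff]
  intro k
  obtain ⟨m, hm⟩ := Filter.eventually_atTop.1 (hc.eventually_le_atBot (k - n - 1))
  have hα (i : ℕ) (hi : m ≤ i) (j : ℤ) (hj : k - n - 1 ≤ j) :
      IsIso ((homologyFunctor C j).map (α i)) :=
    hM.isIso_homologyFunctor_map ((hm i hi).trans hj) ((hm (i + 1) (by lia)).trans hj)
  have := hC.mono_homologyFunctor_map_holim_π hM.plus hα hH (k := k) (by lia)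
  have hgm : g ≫ f ≫ Pi.π M m = π m := by rw [reassoc_of% hg, Pi.lift_π]
  have : IsIso ((homologyFunctor C k).map g ≫ (homologyFunctor C k).map (f ≫ Pi.π M m)) := by
    rw [← Functor.map_comp, hgm]
    exact hM.2.1 m k (by linarith [hm m le_rfl])
  have := epi_of_epi ((homologyFunctor C k).map g) ((homologyFunctor C k).map (f ≫ Pi.π M m))
  have := isIso_of_mono_of_epi ((homologyFunctor C k).map (f ≫ Pi.π M m))
  exact IsIso.of_isIso_comp_right _ ((homologyFunctor C k).map (f ≫ Pi.π M m))

end HomotopyLimit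

theorem isIso_to_holim_truncations_of_ab4StarMinus
    (n : ℕ) (hC : AB4StarMinus C n)
    (N : DerivedCategory C) (M : ℕ → DerivedCategory C)
    (α : ∀ i, M (i + 1) ⟶ M i) (π : ∀ i, N ⟶ M i)
    (hM : IsTruncGESystem N (fun i => -(i : ℤ)) M α π)
    [HasProduct M]
    (H : DerivedCategory C) (f : H ⟶ ∏ᶜ M) (h : ∏ᶜ M ⟶ H⟦(1 : ℤ)⟧)
    (hH : Triangle.mk f (Pi.lift fun i => Pi.π M i - Pi.π M (i + 1) ≫ α i) h ∈
      distTriang (DerivedCategory C))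
    (g : N ⟶ H) (hg : g ≫ f = Pi.lift π) :
    IsIso g :=
  isIso_to_holim_truncations_of_ab4StarMinus_general hC
    (Filter.tendsto_neg_atTop_atBot.comp tendsto_natCast_atTop_atTop) hM hH hg
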